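/- For every integer n ≥ 1 and every x ≥ 0, B̃_n(t;x) = (ξ'(p_n(x))/ξ(p_n(x)))·x + (1/n)·[ S'(1)/S(1) + V'(1)·ξ'(p_n(x))/ξ(p_n(x)) ], where B̃_n(t;x) denotes the operator applied to the identity function t ↦ t. -/

import Mathlib

open Real MeasureTheory Filter Topology

/-- `p_n(x) = n² x² T(1) + n x U(1) + V(1)`. -/
noncomputable def pnx (T U V : ℝ → ℝ) (n : ℕ) (x : ℝ) : ℝ :=
  (n : ℝ) ^ 2 * x ^ 2 * T 1 + (n : ℝ) * x * U 1 + V 1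

/-- The Euler Beta function value `B(j, n+1) = Γ(j)Γ(n+1)/Γ(j+n+1)`. -/
noncomputable def betaB (j n : ℕ) : ℝ :=
  Real.Gamma (j : ℝ) * Real.Gamma ((n : ℝ) + 1) / Real.Gamma ((j : ℝ) + (n : ℝ) + 1)

/-- The Baskakov–Durrmeyer type operator `B̃_n(f;x)`. -/
noncomputable def BDop (ξ S T U V : ℝ → ℝ) (Θ : ℕ → ℝ → ℝ) (n : ℕ) (f : ℝ → ℝ) (x : ℝ) : ℝ :=
  (S 1 * ξ (pnx T U V n x))⁻¹ *
    (Θ 0 ((n : ℝ) * x) * f 0 +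
      ∑' j : ℕ, (Θ (j + 1) ((n : ℝ) * x) / betaB (j + 1) n) *
        ∫ s in Set.Ioi (0 : ℝ), s ^ j * (1 + s) ^ (-((n : ℝ) + (j : ℝ) + 2)) * f s)

/-!
The normalized kernel `s ^ (j - 1) (1 + s) ^ (-(n + j + 1)) / B(j, n + 1)` is the beta prime density
with parameters `j` and `n + 1`, whose mean is `j / n`: the substitution `x = s / (1 + s)` turns it
into an Euler beta integral. Hence `B̃ₙ(t; x)` equals `∑ j Θⱼ(n x) / (n S(1) ξ(pₙ(x)))`, and the sum
is the derivative at `s = 1` of the generating function `S(s) ξ((n x)² T(s) + n x U(s) + V(s))`.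
-/

open FormalMultilinearSeries (ofScalars ofScalars_norm ofScalars_apply_eq)
open ProbabilityTheory (beta beta_pos beta_eq_betaIntegralReal)
open scoped ENNReal

section PowerSeries

theorem hasSum_deriv_of_hasFPowerSeriesOnBall {𝕜 F : Type*} [NontriviallyNormedField 𝕜]
    [NormedAddCommGroup F] [NormedSpace 𝕜 F] [CompleteSpace F] {f : 𝕜 → F}
    {p : FormalMultilinearSeries 𝕜 𝕜 F} {x y : 𝕜} {r : ℝ≥0∞}
    (h : HasFPowerSeriesOnBall f p x r) (hy : y ∈ Metric.eball 0 r) :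
    HasSum (fun j ↦ y ^ j • (j + 1) • p.coeff (j + 1)) (deriv f (x + y)) := by
  simpa using (ContinuousLinearMap.apply 𝕜 F (1 : 𝕜)).hasSum (h.fderiv.hasSum hy)

variable {𝕜 : Type*} [DenselyNormedField 𝕜] {a : ℕ → 𝕜} {f : 𝕜 → 𝕜} {r : ℝ≥0∞} {t : 𝕜}

theorem hasFPowerSeriesOnBall_ofScalars_of_hasSum (hr : 0 < r)
    (h : ∀ s ∈ Metric.eball (0 : 𝕜) r, HasSum (fun j ↦ a j * s ^ j) (f s)) :
    HasFPowerSeriesOnBall f (ofScalars 𝕜 a) 0 r where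
  r_le := by
    refine ENNReal.le_of_forall_nnreal_lt fun t ht ↦ ?_
    obtain ⟨t', htt', ht'r⟩ := ENNReal.lt_iff_exists_nnreal_btwn.1 ht
    obtain ⟨s, hts, hst'⟩ := NormedField.exists_lt_nnnorm_lt 𝕜 (ENNReal.coe_lt_coe.1 htt')
    have hs : s ∈ Metric.eball (0 : 𝕜) r := by
      simpa [enorm] using (ENNReal.coe_lt_coe.2 hst').trans ht'r
    have hterm : Tendsto (fun j ↦ ‖ofScalars 𝕜 a j‖ * ‖s‖ ^ j) atTop (𝓝 0) := by
      simpa [ofScalars_norm] using (h s hs).summable.tendsto_atTop_zero.norm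
    exact (ENNReal.coe_le_coe.2 hts.le).trans ((ofScalars 𝕜 a).le_radius_of_tendsto hterm)
  r_pos := hr
  hasSum {s} hs := by simpa only [ofScalars_apply_eq, smul_eq_mul, zero_add] using h s hs

theorem hasSum_deriv_of_hasSum_pow [CompleteSpace 𝕜]
    (h : ∀ s ∈ Metric.eball (0 : 𝕜) r, HasSum (fun j ↦ a j * s ^ j) (f s))
    (ht : t ∈ Metric.eball 0 r) :
    HasSum (fun j : ℕ ↦ (j + 1) * a (j + 1) * t ^ j) (deriv f t) := by
  have hf := hasFPowerSeriesOnBall_ofScalars_of_hasSum (Metric.pos_of_mem_eball ht) h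
  simpa [mul_comm] using hasSum_deriv_of_hasFPowerSeriesOnBall hf ht

theorem differentiableAt_of_hasSum_pow_injective [CompleteSpace 𝕜] {e : ℕ → ℕ}
    (he : e.Injective) (h : ∀ s ∈ Metric.eball (0 : 𝕜) r, HasSum (fun j ↦ a j * s ^ e j) (f s))
    (ht : t ∈ Metric.eball 0 r) : DifferentiableAt 𝕜 f t := by
  have hext (s : 𝕜) (hs : s ∈ Metric.eball 0 r) :
      HasSum (fun j ↦ Function.extend e a 0 j * s ^ j) (f s) := by
    refine (he.hasSum_iff fun j hj ↦ ?_).1 ?_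
    · simp only [Function.extend_apply' _ _ j hj, Pi.zero_apply, zero_mul]
    · simpa [Function.comp_def, he.extend_apply] using h s hs
  have hf := hasFPowerSeriesOnBall_ofScalars_of_hasSum (Metric.pos_of_mem_eball ht) hext
  exact hf.differentiableOn.differentiableAt (Metric.isOpen_eball.mem_nhds ht)

theorem Ioo_neg_self_eq_eball (ρ : ℝ) : Set.Ioo (-ρ) ρ = Metric.eball 0 (ENNReal.ofReal ρ) := by
  simp [Metric.eball_ofReal, Real.ball_eq_Ioo]

end PowerSeries

section BetaIntegral

variable {a b : ℝ}

theorem integral_Ioo_rpow_mul_one_sub_rpow (ha : 0 < a) (hb : 0 < b) :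
    ∫ x in Set.Ioo (0 : ℝ) 1, x ^ (a - 1) * (1 - x) ^ (b - 1) = beta a b := by
  rw [beta_eq_betaIntegralReal a b ha hb, ← Complex.ofReal_re (∫ _ in _, _),
    ← integral_complex_ofReal, Complex.betaIntegral,
    intervalIntegral.integral_of_le zero_le_one, integral_Ioc_eq_integral_Ioo]
  congr 1
  refine setIntegral_congr_fun measurableSet_Ioo fun x ⟨hx0, hx1⟩ ↦ ?_
  push_cast [Complex.ofReal_cpow hx0.le, Complex.ofReal_cpow (sub_nonneg.2 hx1.le)]
  rfl

theorem image_div_one_add_Ioi : (fun s : ℝ ↦ s / (1 + s)) '' Set.Ioi 0 = Set.Ioo 0 1 := by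
  ext x
  constructor
  · rintro ⟨s, hs : 0 < s, rfl⟩
    exact ⟨by positivity, (div_lt_one (by positivity)).2 (by linarith)⟩
  · rintro ⟨hx0, hx1⟩
    have : 0 < 1 - x := sub_pos.2 hx1
    exact ⟨x / (1 - x), div_pos hx0 this, by field_simp; ring⟩

theorem injOn_div_one_add_Ioi : Set.InjOn (fun s : ℝ ↦ s / (1 + s)) (Set.Ioi 0) := by
  intro s (hs : 0 < s) t (ht : 0 < t) hst
  have := (div_eq_div_iff (by positivity) (by positivity)).1 hst
  linarith

theorem hasDerivAt_div_one_add {s : ℝ} (hs : 1 + s ≠ 0) :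
    HasDerivAt (fun s : ℝ ↦ s / (1 + s)) (((1 + s) ^ 2)⁻¹) s := by
  refine ((hasDerivAt_id' s).div ((hasDerivAt_id' s).const_add 1) hs).congr_deriv ?_
  field_simp
  ring

theorem integral_Ioi_rpow_mul_one_add_rpow (ha : 0 < a) (hb : 0 < b) :
    ∫ s in Set.Ioi (0 : ℝ), s ^ (a - 1) * (1 + s) ^ (-(a + b)) = beta a b := by
  have hpos {s : ℝ} (hs : s ∈ Set.Ioi 0) : 0 < 1 + s := add_pos one_pos hs
  rw [← integral_Ioo_rpow_mul_one_sub_rpow ha hb, ← image_div_one_add_Ioi,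
    integral_image_eq_integral_abs_deriv_smul measurableSet_Ioi
      (fun s hs ↦ (hasDerivAt_div_one_add (hpos hs).ne').hasDerivWithinAt) injOn_div_one_add_Ioi]
  refine setIntegral_congr_fun measurableSet_Ioi fun s hs ↦ ?_
  have hs₁ : 0 < 1 + s := hpos hs
  have hsub : 1 - s / (1 + s) = (1 + s)⁻¹ := by field_simp; ring
  have hexp : (1 + s) ^ (-(a + b)) =
      ((1 + s) ^ 2)⁻¹ * ((1 + s) ^ (a - 1))⁻¹ * ((1 + s) ^ (b - 1))⁻¹ := by
    simp only [← rpow_two, ← rpow_neg hs₁.le, ← rpow_add hs₁]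
    ring_nf
  simp only [hexp, hsub, div_rpow (le_of_lt hs) hs₁.le, inv_rpow hs₁.le, smul_eq_mul,
    abs_of_pos (inv_pos.2 (pow_pos hs₁ 2))]
  ring

theorem beta_add_one_sub_one (ha : a ≠ 0) (hb : b ≠ 1) :
    beta (a + 1) (b - 1) = a / (b - 1) * beta a b := by
  have hb₁ : b - 1 ≠ 0 := sub_ne_zero.2 hb
  have hΓb : Gamma b = (b - 1) * Gamma (b - 1) := by simpa using Gamma_add_one hb₁
  rw [beta, beta, Gamma_add_one ha, hΓb, add_add_sub_cancel]
  field_simp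

theorem integral_Ioi_rpow_mul_one_add_rpow_mul_self (ha : 0 < a) (hb : 1 < b) :
    ∫ s in Set.Ioi (0 : ℝ), s ^ (a - 1) * (1 + s) ^ (-(a + b)) * s = a / (b - 1) * beta a b := by
  rw [← beta_add_one_sub_one ha.ne' hb.ne',
    ← integral_Ioi_rpow_mul_one_add_rpow (by positivity) (sub_pos.2 hb)]
  refine setIntegral_congr_fun measurableSet_Ioi fun s (hs : 0 < s) ↦ ?_
  calc s ^ (a - 1) * (1 + s) ^ (-(a + b)) * s
      = s ^ (a - 1 + 1) * (1 + s) ^ (-(a + b)) := by rw [rpow_add_one hs.ne']; ring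
    _ = s ^ (a + 1 - 1) * (1 + s) ^ (-(a + 1 + (b - 1))) := by ring_nf

end BetaIntegral

section BaskakovDurrmeyer

theorem betaB_eq_beta (j n : ℕ) : betaB j n = beta j (n + 1) := by
  rw [betaB, beta, add_assoc]

theorem integral_baskakov_kernel_mul_self {n : ℕ} (hn : 1 ≤ n) (j : ℕ) :
    ∫ s in Set.Ioi (0 : ℝ), s ^ j * (1 + s) ^ (-((n : ℝ) + j + 2)) * s =
      (j + 1) / n * betaB (j + 1) n := by
  have hmean := integral_Ioi_rpow_mul_one_add_rpow_mul_self (a := j + 1) (b := n + 1)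
    (by positivity) (lt_add_of_pos_left 1 (by positivity))
  have hexp : -((n : ℝ) + j + 2) = -(j + 1 + (n + 1)) := by ring
  simpa only [hexp, add_sub_cancel_right, rpow_natCast, betaB_eq_beta, Nat.cast_add_one] using hmean

theorem BDop_id {ξ S T U V : ℝ → ℝ} {Θ : ℕ → ℝ → ℝ} {n : ℕ} {x : ℝ} (hn : 1 ≤ n) :
    BDop ξ S T U V Θ n (fun t ↦ t) x =
      (∑' j : ℕ, (j + 1) * Θ (j + 1) (n * x)) / (n * (S 1 * ξ (pnx T U V n x))) := by
  have hterm (j : ℕ) : Θ (j + 1) (n * x) / betaB (j + 1) n * ((j + 1) / n * betaB (j + 1) n) =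
      (n : ℝ)⁻¹ * ((j + 1) * Θ (j + 1) (n * x)) := by
    have hbeta : betaB (j + 1) n ≠ 0 := by
      rw [betaB_eq_beta]
      exact (beta_pos (by positivity) (by positivity)).ne'
    field_simp
  simp only [BDop, integral_baskakov_kernel_mul_self hn, hterm, tsum_mul_left, mul_zero, zero_add]
  ring

theorem hasDerivAt_mul_comp_quadratic {𝕜 : Type*} [NontriviallyNormedField 𝕜]
    {ξ S T U V : 𝕜 → 𝕜} {ξ' S' T' U' V' y s : 𝕜}
    (hξ : HasDerivAt ξ ξ' (y ^ 2 * T s + y * U s + V s)) (hS : HasDerivAt S S' s)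
    (hT : HasDerivAt T T' s) (hU : HasDerivAt U U' s) (hV : HasDerivAt V V' s) :
    HasDerivAt (fun s ↦ S s * ξ (y ^ 2 * T s + y * U s + V s))
      (S' * ξ (y ^ 2 * T s + y * U s + V s) +
        S s * (ξ' * (y ^ 2 * T' + y * U' + V'))) s :=
  hS.mul (hξ.comp s (((hT.const_mul _).add (hU.const_mul _)).add hV))

theorem pnx_eq_quadratic_mul (T U V : ℝ → ℝ) (n : ℕ) (x : ℝ) :
    pnx T U V n x = (n * x) ^ 2 * T 1 + n * x * U 1 + V 1 := by
  rw [pnx, mul_pow]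

theorem stmt4_general {ρ : ℝ} (hρ : 1 < ρ) {ξ S T U V : ℝ → ℝ} {Θ : ℕ → ℝ → ℝ} {n : ℕ} {x : ℝ}
    (hξ : DifferentiableAt ℝ ξ (pnx T U V n x)) (hS : DifferentiableAt ℝ S 1)
    (hT : DifferentiableAt ℝ T 1) (hU : DifferentiableAt ℝ U 1) (hV : DifferentiableAt ℝ V 1)
    (hgen : ∀ s ∈ Set.Ioo (-ρ) ρ, HasSum (fun j ↦ Θ j (n * x) * s ^ j)
      (S s * ξ ((n * x) ^ 2 * T s + n * x * U s + V s)))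
    (hS1 : S 1 ≠ 0) (hξp : ξ (pnx T U V n x) ≠ 0) (hn : 1 ≤ n) :
    BDop ξ S T U V Θ n (fun t ↦ t) x =
      deriv ξ (pnx T U V n x) / ξ (pnx T U V n x) * (n * x ^ 2 * deriv T 1 + x * deriv U 1) +
        1 / n * (deriv S 1 / S 1 +
          deriv V 1 * (deriv ξ (pnx T U V n x) / ξ (pnx T U V n x))) := by
  rw [Ioo_neg_self_eq_eball] at hgen
  have hsum := hasSum_deriv_of_hasSum_pow hgen (t := 1) (by simpa using hρ)
  simp only [one_pow, mul_one] at hsum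
  have hderiv := hasDerivAt_mul_comp_quadratic (pnx_eq_quadratic_mul T U V n x ▸ hξ.hasDerivAt)
    hS.hasDerivAt hT.hasDerivAt hU.hasDerivAt hV.hasDerivAt
  rw [BDop_id hn, hsum.tsum_eq, hderiv.deriv, ← pnx_eq_quadratic_mul]
  have hn₀ : (n : ℝ) ≠ 0 := by positivity
  field_simp
  ring

end BaskakovDurrmeyer

theorem stmt4
    (ρ : ℝ) (hρ : 1 < ρ)
    (ξ S T U V : ℝ → ℝ) (Θ : ℕ → ℝ → ℝ)
    (p q r u v : ℕ → ℝ)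
    (hξser : ∀ t : ℝ, HasSum (fun j : ℕ => p j * t ^ j) (ξ t))
    (hξnn : ∀ t : ℝ, 0 ≤ ξ t)
    (hSser : ∀ s ∈ Set.Ioo (-ρ) ρ, HasSum (fun j : ℕ => q j * s ^ j) (S s))
    (hTser : ∀ s ∈ Set.Ioo (-ρ) ρ, HasSum (fun j : ℕ => r j * s ^ (j + 1)) (T s))
    (hUser : ∀ s ∈ Set.Ioo (-ρ) ρ, HasSum (fun j : ℕ => u j * s ^ (j + 2)) (U s))
    (hVser : ∀ s ∈ Set.Ioo (-ρ) ρ, HasSum (fun j : ℕ => v j * s ^ (j + 3)) (V s))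
    (hS1 : 0 < S 1)
    (hT'1 : deriv T 1 = 0) (hT''1 : deriv (deriv T) 1 = 0) (hU'1 : deriv U 1 = 1)
    (hΘnn : ∀ (j : ℕ) (y : ℝ), 0 ≤ y → 0 ≤ Θ j y)
    (hgen : ∀ y : ℝ, 0 ≤ y → ∀ s ∈ Set.Ioo (-ρ) ρ,
      HasSum (fun j : ℕ => Θ j y * s ^ j) (S s * ξ (y ^ 2 * T s + y * U s + V s)))
    (hξp : ∀ (m : ℕ), 1 ≤ m → ∀ y : ℝ, 0 ≤ y → 0 < ξ (pnx T U V m y))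
    (n : ℕ) (hn : 1 ≤ n) (x : ℝ) (hx : 0 ≤ x) :
    BDop ξ S T U V Θ n (fun t => t) x =
      deriv ξ (pnx T U V n x) / ξ (pnx T U V n x) * x +
        (1 / (n : ℝ)) * (deriv S 1 / S 1 +
          deriv V 1 * (deriv ξ (pnx T U V n x) / ξ (pnx T U V n x))) := by
  simp only [Ioo_neg_self_eq_eball] at hSser hTser hUser hVser
  have h1 : (1 : ℝ) ∈ Metric.eball 0 (ENNReal.ofReal ρ) := by simpa using hρ
  simpa [hT'1, hU'1] using stmt4_general hρ
    (differentiableAt_of_hasSum_pow_injective (r := ⊤) Function.injective_id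
      (fun s _ ↦ hξser s) (by simp))
    (differentiableAt_of_hasSum_pow_injective Function.injective_id hSser h1)
    (differentiableAt_of_hasSum_pow_injective (add_left_injective 1) hTser h1)
    (differentiableAt_of_hasSum_pow_injective (add_left_injective 2) hUser h1)
    (differentiableAt_of_hasSum_pow_injective (add_left_injective 3) hVser h1)
    (hgen _ (by positivity)) hS1.ne' (hξp n hn x hx).ne' hn
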